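/- arXiv:2002.07142 — 3 statements merged into one kernel-verified Lean document; each statement's English description precedes it below -/
import Mathlib

section
/- For each κ ∈ (0,1/2) there is a constant C < ∞ such that for every bounded continuous S: ℝ → ℝ with ‖S‖_{C^{1/2−κ/2}} < ∞, every bounded continuous v: ℝ → ℝ with ‖v‖_{C^{1/2+κ}} < ∞, and every x ∈ ℝ, the integral ∫_ℝ |e^{S(y)−S(x)} − 1| · |v(y) − v(x)| / (y−x)² dy is finite and bounded above by C (1 + exp(2‖S‖_{C^{1/2−κ/2}})) ‖v‖_{C^{1/2+κ}}. In particular the operator Ξ_S v(x) := (1/π) ∫_ℝ (e^{S(y)−S(x)} − 1)(v(y) − v(x))/(y−x)² dy is well-defined and satisfies sup_x |Ξ_S v(x)| ≤ C (1 + exp(2‖S‖_{C^{1/2−κ/2}})) ‖v‖_{C^{1/2+κ}}. -/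
open MeasureTheory

/-- The set whose supremum is the Hölder seminorm of `g` with exponent `γ`:
values `|g(x) - g(y)| / |x-y|^γ` over `x ≠ y` with `|x-y| ≤ 1`. -/
noncomputable def holderSet (γ : ℝ) (g : ℝ → ℝ) : Set ℝ :=
  {r | ∃ x y : ℝ, x ≠ y ∧ |x - y| ≤ 1 ∧ r = |g x - g y| / |x - y| ^ γ}

/-- The Hölder norm `‖g‖_{C^γ} = sup |g| + sup_{0<|x-y|≤1} |g(x)-g(y)|/|x-y|^γ`. -/
noncomputable def holderNorm (γ : ℝ) (g : ℝ → ℝ) : ℝ :=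
  sSup (Set.range fun x => |g x|) + sSup (holderSet γ g)

/-- Finiteness of the Hölder norm `‖g‖_{C^γ}`: `g` is bounded and its Hölder
seminorm quotient set is bounded above. -/
def HolderFinite (γ : ℝ) (g : ℝ → ℝ) : Prop :=
  BddAbove (Set.range fun x => |g x|) ∧ BddAbove (holderSet γ g)

/-!
Let `S` and `v` have Hölder exponents `α` and `β` with `α + β > 1`. Near the diagonal the two
Hölder bounds multiply to a constant times `|y - x| ^ (α + β)`; away from it both factors are merely
bounded. After division by `(y - x) ^ 2` the integrand is thus dominated by a multiple of a
translate of `min (|z| ^ (α + β - 2)) (|z| ^ (-2))`, which is integrable both at `0` and at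
infinity, and whose integral does not depend on `x`.
-/

section RadialKernel

lemma integrableOn_Ioi_min_rpow {a b : ℝ} (ha : -1 < a) (hb : b < -1) :
    IntegrableOn (fun r : ℝ => min (r ^ a) (r ^ b)) (Set.Ioi 0) := by
  have hmeas : Measurable fun r : ℝ => min (r ^ a) (r ^ b) := by fun_prop
  have near : IntegrableOn (fun r : ℝ => min (r ^ a) (r ^ b)) (Set.Ioc 0 1) := by
    have hint : IntegrableOn (fun r : ℝ => r ^ a) (Set.Ioc 0 1) :=
      (intervalIntegrable_iff_integrableOn_Ioc_of_le zero_le_one).1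
        (intervalIntegral.intervalIntegrable_rpow' ha)
    refine hint.mono' hmeas.aestronglyMeasurable
      (ae_restrict_of_forall_mem measurableSet_Ioc fun r hr => ?_)
    have := hr.1
    rw [Real.norm_of_nonneg (by positivity)]
    exact min_le_left _ _
  have far : IntegrableOn (fun r : ℝ => min (r ^ a) (r ^ b)) (Set.Ioi 1) := by
    refine (integrableOn_Ioi_rpow_of_lt hb one_pos).mono' hmeas.aestronglyMeasurable
      (ae_restrict_of_forall_mem measurableSet_Ioi fun r hr => ?_)
    have : 0 < r := one_pos.trans hr
    rw [Real.norm_of_nonneg (by positivity)]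
    exact min_le_right _ _
  rw [← Set.Ioc_union_Ioi_eq_Ioi zero_le_one]
  exact near.union far

lemma integrable_min_norm_rpow {E : Type*} [NormedAddCommGroup E] [NormedSpace ℝ E]
    [FiniteDimensional ℝ E] [Nontrivial E] [MeasurableSpace E] [BorelSpace E]
    (μ : Measure E) [μ.IsAddHaarMeasure] {a b : ℝ}
    (ha : -(Module.finrank ℝ E : ℝ) < a) (hb : b < -(Module.finrank ℝ E : ℝ)) :
    Integrable (fun z : E => min (‖z‖ ^ a) (‖z‖ ^ b)) μ := by
  set d := Module.finrank ℝ E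
  have hd : ((d - 1 : ℕ) : ℝ) = d - 1 := Nat.cast_pred Module.finrank_pos
  refine (integrable_fun_norm_addHaar μ (f := fun r : ℝ => min (r ^ a) (r ^ b))).2 ?_
  refine (integrableOn_Ioi_min_rpow (a := d - 1 + a) (b := d - 1 + b)
    (by linarith) (by linarith)).congr_fun (fun r (hr : 0 < r) => ?_) measurableSet_Ioi
  simp only [smul_eq_mul]
  rw [mul_min_of_nonneg _ _ (by positivity), ← Real.rpow_natCast, hd, Real.rpow_add hr,
    Real.rpow_add hr]

lemma min_rpow_one_div_sq {r : ℝ} (hr : 0 ≤ r) (p : ℝ) :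
    min (r ^ p) 1 / r ^ 2 = min (r ^ (p - 2)) (r ^ (-2 : ℝ)) := by
  rcases hr.eq_or_lt with rfl | hr
  · simp [Real.zero_rpow_nonneg]
  · rw [← min_div_div_right (by positivity), Real.rpow_sub hr, Real.rpow_neg hr.le, Real.rpow_two,
      one_div]

end RadialKernel

section Exp

lemma abs_exp_sub_one_le_exp_abs (t : ℝ) : |Real.exp t - 1| ≤ Real.exp |t| := by
  have : |Real.exp t - 1| ≤ Real.exp |t| - 1 := by
    exact_mod_cast (by simpa using Complex.norm_exp_sub_sum_le_exp_norm_sub_sum t 1 :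
      ‖Complex.exp t - 1‖ ≤ Real.exp |t| - 1)
  linarith

lemma abs_exp_sub_one_le_abs_mul_exp_abs (t : ℝ) : |Real.exp t - 1| ≤ |t| * Real.exp |t| := by
  exact_mod_cast (by simpa using Complex.norm_exp_sub_sum_le_norm_mul_exp t 1 :
    ‖Complex.exp t - 1‖ ≤ |t| * Real.exp |t|)

end Exp

section Holder

variable {γ : ℝ} {g : ℝ → ℝ}

lemma sSup_range_abs_nonneg (g : ℝ → ℝ) : 0 ≤ sSup (Set.range fun x => |g x|) :=
  Real.sSup_nonneg (Set.forall_mem_range.2 fun x => abs_nonneg (g x))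

lemma sSup_holderSet_nonneg (γ : ℝ) (g : ℝ → ℝ) : 0 ≤ sSup (holderSet γ g) := by
  refine Real.sSup_nonneg ?_
  rintro _ ⟨x, y, -, -, rfl⟩
  positivity

lemma holderNorm_nonneg (γ : ℝ) (g : ℝ → ℝ) : 0 ≤ holderNorm γ g :=
  add_nonneg (sSup_range_abs_nonneg g) (sSup_holderSet_nonneg γ g)

lemma sSup_range_abs_le_holderNorm (γ : ℝ) (g : ℝ → ℝ) :
    sSup (Set.range fun x => |g x|) ≤ holderNorm γ g :=
  le_add_of_nonneg_right (sSup_holderSet_nonneg γ g)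

lemma sSup_holderSet_le_holderNorm (γ : ℝ) (g : ℝ → ℝ) :
    sSup (holderSet γ g) ≤ holderNorm γ g :=
  le_add_of_nonneg_left (sSup_range_abs_nonneg g)

namespace HolderFinite

lemma abs_sub_le_two_mul_sSup (hg : HolderFinite γ g) (x y : ℝ) :
    |g x - g y| ≤ 2 * sSup (Set.range fun z => |g z|) := by
  have hx : |g x| ≤ sSup (Set.range fun z => |g z|) := le_csSup hg.1 ⟨x, rfl⟩
  have hy : |g y| ≤ sSup (Set.range fun z => |g z|) := le_csSup hg.1 ⟨y, rfl⟩
  linarith [abs_sub (g x) (g y)]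

lemma abs_sub_le_sSup_mul_rpow (hg : HolderFinite γ g) {x y : ℝ} (hxy : |x - y| ≤ 1) :
    |g x - g y| ≤ sSup (holderSet γ g) * |x - y| ^ γ := by
  rcases eq_or_ne x y with rfl | hne
  · rw [sub_self, abs_zero]
    exact mul_nonneg (sSup_holderSet_nonneg γ g) (by positivity)
  · exact (div_le_iff₀ (Real.rpow_pos_of_pos (abs_sub_pos.2 hne) γ)).1
      (le_csSup hg.2 ⟨x, y, hne, hxy, rfl⟩)

lemma abs_exp_sub_sub_one_le (hg : HolderFinite γ g) (x y : ℝ) :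
    |Real.exp (g x - g y) - 1| ≤ Real.exp (2 * holderNorm γ g) := by
  refine (abs_exp_sub_one_le_exp_abs _).trans (Real.exp_le_exp.2 ?_)
  linarith [hg.abs_sub_le_two_mul_sSup x y, sSup_range_abs_le_holderNorm γ g]

lemma abs_exp_sub_sub_one_le_rpow (hg : HolderFinite γ g) {x y : ℝ} (hxy : |x - y| ≤ 1) :
    |Real.exp (g x - g y) - 1| ≤ Real.exp (2 * holderNorm γ g) * |x - y| ^ γ := by
  have habsorb : sSup (holderSet γ g) ≤ Real.exp (2 * sSup (holderSet γ g)) := by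
    linarith [Real.add_one_le_exp (2 * sSup (holderSet γ g)), sSup_holderSet_nonneg γ g]
  calc |Real.exp (g x - g y) - 1|
      ≤ |g x - g y| * Real.exp |g x - g y| := abs_exp_sub_one_le_abs_mul_exp_abs _
    _ ≤ (sSup (holderSet γ g) * |x - y| ^ γ) *
          Real.exp (2 * sSup (Set.range fun z => |g z|)) := by
        gcongr
        · exact mul_nonneg (sSup_holderSet_nonneg γ g) (by positivity)
        · exact hg.abs_sub_le_sSup_mul_rpow hxy
        · exact hg.abs_sub_le_two_mul_sSup x y
    _ ≤ (Real.exp (2 * sSup (holderSet γ g)) * |x - y| ^ γ) *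
          Real.exp (2 * sSup (Set.range fun z => |g z|)) := by gcongr
    _ = Real.exp (2 * holderNorm γ g) * |x - y| ^ γ := by
        rw [holderNorm, mul_add, Real.exp_add]
        ring

end HolderFinite

end Holder

section Integrand

variable {α β : ℝ} {S v : ℝ → ℝ}

lemma abs_exp_sub_sub_one_mul_abs_sub_le (hαβ : 0 < α + β) (hS : HolderFinite α S)
    (hv : HolderFinite β v) (x y : ℝ) :
    |Real.exp (S y - S x) - 1| * |v y - v x| ≤
      2 * Real.exp (2 * holderNorm α S) * holderNorm β v * min (|y - x| ^ (α + β)) 1 := by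
  have hv₀ := holderNorm_nonneg β v
  rcases le_total |y - x| 1 with near | far
  · rw [min_eq_left (Real.rpow_le_one (abs_nonneg _) near hαβ.le)]
    have hvdiff : |v y - v x| ≤ 2 * holderNorm β v * |y - x| ^ β :=
      (hv.abs_sub_le_sSup_mul_rpow near).trans <| by
        gcongr
        linarith [sSup_holderSet_le_holderNorm β v]
    calc |Real.exp (S y - S x) - 1| * |v y - v x|
        ≤ (Real.exp (2 * holderNorm α S) * |y - x| ^ α) *
            (2 * holderNorm β v * |y - x| ^ β) := by
          gcongr
          exact hS.abs_exp_sub_sub_one_le_rpow near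
      _ = 2 * Real.exp (2 * holderNorm α S) * holderNorm β v * |y - x| ^ (α + β) := by
          rw [Real.rpow_add' (abs_nonneg _) hαβ.ne']
          ring
  · rw [min_eq_right (Real.one_le_rpow far hαβ.le)]
    have hvdiff : |v y - v x| ≤ 2 * holderNorm β v := by
      linarith [hv.abs_sub_le_two_mul_sSup y x, sSup_range_abs_le_holderNorm β v]
    calc |Real.exp (S y - S x) - 1| * |v y - v x|
        ≤ Real.exp (2 * holderNorm α S) * (2 * holderNorm β v) := by
          gcongr
          exact hS.abs_exp_sub_sub_one_le y x
      _ = 2 * Real.exp (2 * holderNorm α S) * holderNorm β v * 1 := by ring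

lemma abs_exp_sub_sub_one_mul_abs_sub_div_sq_le (hαβ : 0 < α + β) (hS : HolderFinite α S)
    (hv : HolderFinite β v) (x y : ℝ) :
    |Real.exp (S y - S x) - 1| * |v y - v x| / (y - x) ^ 2 ≤
      2 * Real.exp (2 * holderNorm α S) * holderNorm β v *
        min (‖y - x‖ ^ (α + β - 2)) (‖y - x‖ ^ (-2 : ℝ)) := by
  rw [← min_rpow_one_div_sq (norm_nonneg _), Real.norm_eq_abs, sq_abs, ← mul_div_assoc]
  exact div_le_div_of_nonneg_right (abs_exp_sub_sub_one_mul_abs_sub_le hαβ hS hv x y) (sq_nonneg _)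

end Integrand

section Domination

variable {G F : Type*} [AddGroup G] [MeasurableSpace G] [MeasurableAdd G] {μ : Measure G}
  [μ.IsAddRightInvariant] [NormedAddCommGroup F] {f : G → F} {k : G → ℝ}

lemma lintegral_ofReal_norm_le_of_norm_le_sub (hk : Integrable k μ) {x : G}
    (hf : ∀ y, ‖f y‖ ≤ k (y - x)) :
    ∫⁻ y, ENNReal.ofReal ‖f y‖ ∂μ ≤ ENNReal.ofReal (∫ z, k z ∂μ) := by
  rw [← integral_sub_right_eq_self k x, ofReal_integral_eq_lintegral_ofReal
    (hk.comp_sub_right x) (.of_forall fun y => (norm_nonneg _).trans (hf y))]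
  exact lintegral_mono fun y => ENNReal.ofReal_le_ofReal (hf y)

lemma norm_integral_le_of_norm_le_sub [NormedSpace ℝ F] (hk : Integrable k μ) {x : G}
    (hf : ∀ y, ‖f y‖ ≤ k (y - x)) : ‖∫ y, f y ∂μ‖ ≤ ∫ z, k z ∂μ := by
  rw [← integral_sub_right_eq_self k x]
  exact norm_integral_le_of_norm_le (hk.comp_sub_right x) (.of_forall hf)

end Domination

theorem Xi_operator_bounded_general {α β : ℝ} (hαβ : 1 < α + β) :
    ∃ C : ℝ, ∀ S v : ℝ → ℝ, HolderFinite α S → HolderFinite β v →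
      ∀ x : ℝ,
        (∫⁻ y : ℝ, ENNReal.ofReal
              (|Real.exp (S y - S x) - 1| * |v y - v x| / (y - x) ^ 2)
          ≤ ENNReal.ofReal (C * (1 + Real.exp (2 * holderNorm α S)) * holderNorm β v)) ∧
        |(1 / Real.pi) * ∫ y : ℝ,
              (Real.exp (S y - S x) - 1) * (v y - v x) / (y - x) ^ 2|
          ≤ C * (1 + Real.exp (2 * holderNorm α S)) * holderNorm β v := by
  set k : ℝ → ℝ := fun z => min (‖z‖ ^ (α + β - 2)) (‖z‖ ^ (-2 : ℝ))
  have hk : Integrable k := integrable_min_norm_rpow volume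
    (by rw [Module.finrank_self]; push_cast; linarith) (by norm_num)
  refine ⟨2 * ∫ z, k z, fun S v hS hv x => ?_⟩
  set K := 2 * (1 + Real.exp (2 * holderNorm α S)) * holderNorm β v
  have hbound (y : ℝ) :
      ‖(Real.exp (S y - S x) - 1) * (v y - v x) / (y - x) ^ 2‖ ≤ K * k (y - x) := by
    rw [Real.norm_eq_abs, abs_div, abs_mul, abs_sq]
    refine (abs_exp_sub_sub_one_mul_abs_sub_div_sq_le (by linarith) hS hv x y).trans ?_
    have := holderNorm_nonneg β v
    gcongr
    linarith
  have hK : ∫ z, K * k z =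
      2 * (∫ z, k z) * (1 + Real.exp (2 * holderNorm α S)) * holderNorm β v := by
    rw [integral_const_mul]
    ring
  have hπ : ‖1 / Real.pi‖ ≤ 1 := by
    rw [Real.norm_of_nonneg (by positivity), div_le_one Real.pi_pos]
    linarith [Real.pi_gt_three]
  rw [← hK, ← Real.norm_eq_abs, norm_mul]
  constructor
  · simpa only [Real.norm_eq_abs, abs_div, abs_mul, abs_sq] using
      lintegral_ofReal_norm_le_of_norm_le_sub (hk.const_mul K) hbound
  · exact (mul_le_of_le_one_left (norm_nonneg _) hπ).trans
      (norm_integral_le_of_norm_le_sub (hk.const_mul K) hbound)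

/-- For `κ ∈ (0,1/2)` there is `C < ∞` such that for every bounded continuous `S`
with `‖S‖_{C^(1/2-κ/2)} < ∞`, every bounded continuous `v` with
`‖v‖_{C^(1/2+κ)} < ∞`, and every `x`, the integral
`∫ |e^(S(y)-S(x)) - 1| |v(y)-v(x)| / (y-x)² dy` is finite and at most
`C (1 + exp(2‖S‖_{C^(1/2-κ/2)})) ‖v‖_{C^(1/2+κ)}`; in particular the nonlocal
operator `Ξ_S v(x)` is well-defined and bounded by the same quantity. -/
theorem Xi_operator_bounded (κ : ℝ) (hκ : κ ∈ Set.Ioo (0 : ℝ) (1 / 2)) :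
    ∃ C : ℝ, ∀ S v : ℝ → ℝ, Continuous S → HolderFinite (1 / 2 - κ / 2) S →
      Continuous v → HolderFinite (1 / 2 + κ) v →
      ∀ x : ℝ,
        (∫⁻ y : ℝ, ENNReal.ofReal
              (|Real.exp (S y - S x) - 1| * |v y - v x| / (y - x) ^ 2)
          ≤ ENNReal.ofReal
              (C * (1 + Real.exp (2 * holderNorm (1 / 2 - κ / 2) S)) *
                holderNorm (1 / 2 + κ) v)) ∧
        |(1 / Real.pi) * ∫ y : ℝ,
              (Real.exp (S y - S x) - 1) * (v y - v x) / (y - x) ^ 2|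
          ≤ C * (1 + Real.exp (2 * holderNorm (1 / 2 - κ / 2) S)) *
              holderNorm (1 / 2 + κ) v := by
  obtain ⟨C, hC⟩ := Xi_operator_bounded_general (α := 1 / 2 - κ / 2) (β := 1 / 2 + κ)
    (by linarith [hκ.1])
  exact ⟨C, fun S v _ hS _ hv => hC S v hS hv⟩
end

section
/- Let S: ℝ → ℝ be infinitely differentiable with S and its first derivative S′ bounded, and let v: ℝ → ℝ be infinitely differentiable with compact support. Then for every x ∈ ℝ: (i) the principal values Λv(x) := (1/π) pv∫_ℝ (v(y)−v(x))/(y−x)² dy, ΛS(x) := (1/π) pv∫_ℝ (S(y)−S(x))/(y−x)² dy, and Λ(e^S v)(x) := (1/π) pv∫_ℝ (e^{S(y)}v(y) − e^{S(x)}v(x))/(y−x)² dy all exist; (ii) the integrals Z̃(x) := (1/π) ∫_ℝ (e^{S(y)−S(x)} − 1 − (S(y)−S(x)))/(y−x)² dy and Ξv(x) := (1/π) ∫_ℝ (e^{S(y)−S(x)} − 1)(v(y) − v(x))/(y−x)² dy converge absolutely; and (iii) e^{−S(x)} Λ(e^S v)(x) = Λv(x) + v(x) ΛS(x) + Ξv(x)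 + Z̃(x) v(x). -/
/-!
With `t = S y - S x`, the identity
`e^(S y) v y - e^(S x) v x`
`  = e^(S x) ((v y - v x) + v x t + (e^t - 1) (v y - v x) + v x (e^t - 1 - t))`
splits the integrand of `Λ(e^S v)` into those of `Λv` and `ΛS`, and two which are absolutely
integrable: at `x` both numerators vanish to second order, because `e^t - 1 = O(t)` and
`e^t - 1 - t = O(t²)`. For `Λf` itself, subtract `f'(x) sin (y - x)` from `f y - f x`: the
difference is bounded and its quotient by `(y - x)²` is integrable, while the subtracted term is
odd about `x`, so that its quotient has principal value zero.
-/

open MeasureTheory Filter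

/-- `pvAt g x L`: the principal value integral `pv ∫ g(y) dy` around the singular
point `x` exists and equals `L`, i.e. the truncated integrals over `{|y-x| > ε}`
exist and converge to `L` as `ε → 0⁺`. -/
def pvAt (g : ℝ → ℝ) (x L : ℝ) : Prop :=
  (∀ ε : ℝ, 0 < ε → IntegrableOn g {y : ℝ | ε < |y - x|}) ∧
  Tendsto (fun ε : ℝ => ∫ y in {y : ℝ | ε < |y - x|}, g y)
    (nhdsWithin 0 (Set.Ioi 0)) (nhds L)

open Asymptotics Set Topology

section PrincipalValue

variable {g h : ℝ → ℝ} {x L M : ℝ}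

lemma measurableSet_lt_abs_sub (ε x : ℝ) : MeasurableSet {y : ℝ | ε < |y - x|} :=
  measurableSet_lt measurable_const (by fun_prop)

lemma pvAt.add (hg : pvAt g x L) (hh : pvAt h x M) : pvAt (fun y => g y + h y) x (L + M) := by
  refine ⟨fun ε hε => (hg.1 ε hε).add (hh.1 ε hε), (hg.2.add hh.2).congr' ?_⟩
  filter_upwards [self_mem_nhdsWithin] with ε hε
  exact (integral_add (hg.1 ε hε) (hh.1 ε hε)).symm

lemma pvAt.const_mul (c : ℝ) (hg : pvAt g x L) : pvAt (fun y => c * g y) x (c * L) :=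
  ⟨fun ε hε => (hg.1 ε hε).const_mul c,
    (hg.2.const_mul c).congr fun _ => (integral_const_mul c _).symm⟩

lemma aecover_lt_abs_sub (x : ℝ) :
    AECover volume (𝓝[>] (0 : ℝ)) fun ε => {y : ℝ | ε < |y - x|} where
  ae_eventually_mem := by
    filter_upwards [compl_mem_ae_iff.2 (measure_singleton x)] with y (hy : y ≠ x)
    exact mem_nhdsWithin_of_mem_nhds (Iio_mem_nhds (abs_pos.2 (sub_ne_zero.2 hy)))
  measurableSet ε := measurableSet_lt_abs_sub ε x

lemma pvAt_of_integrable (x : ℝ) (hg : Integrable g) : pvAt g x (∫ y, g y) :=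
  ⟨fun _ _ => hg.integrableOn,
    (aecover_lt_abs_sub x).integral_tendsto_of_countably_generated hg⟩

lemma pvAt_zero_of_odd_about (hodd : ∀ y, g (2 * x - y) = -g y)
    (hg : ∀ ε, 0 < ε → IntegrableOn g {y | ε < |y - x|}) : pvAt g x 0 := by
  refine ⟨hg, tendsto_const_nhds.congr fun ε => ?_⟩
  rw [← integral_indicator (measurableSet_lt_abs_sub ε x)]
  set G := {y : ℝ | ε < |y - x|}.indicator g
  have hG (y : ℝ) : G (2 * x - y) = -G y := by
    have habs : |2 * x - y - x| = |y - x| := by rw [abs_sub_comm y x]; ring_nf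
    simp only [G, indicator_apply, mem_ofPred_eq, habs, hodd]
    split_ifs <;> simp
  have hrefl : ∫ y, G (2 * x - y) = ∫ y, G y := integral_sub_left_eq_self G volume (2 * x)
  simp only [hG, integral_neg] at hrefl
  linarith

end PrincipalValue

section QuotientBySquare

variable {h : ℝ → ℝ} {x ε : ℝ}

lemma integrable_of_integrableAtFilter_nhds (hx : IntegrableAtFilter h (𝓝 x))
    (hfar : ∀ ε, 0 < ε → IntegrableOn h {y | ε < |y - x|}) : Integrable h := by
  obtain ⟨s, hs, hint⟩ := hx
  obtain ⟨ε, hε, hball⟩ := Metric.nhds_basis_closedBall.mem_iff.1 hs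
  rw [← integrableOn_univ]
  refine (hint.union (hfar ε hε)).mono_set fun y _ => ?_
  rcases le_or_gt |y - x| ε with hy | hy
  exacts [Or.inl (hball hy), Or.inr hy]

lemma integrableOn_inv_sq (x : ℝ) (hε : 0 < ε) :
    IntegrableOn (fun y => ((y - x) ^ 2)⁻¹) {y | ε < |y - x|} := by
  have hdom : Integrable fun y : ℝ => (1 + (ε ^ 2)⁻¹) * (1 + (y - x) ^ 2)⁻¹ :=
    (integrable_inv_one_add_sq.comp_sub_right x).const_mul _
  refine hdom.integrableOn.mono' (by fun_prop) ?_
  refine ae_restrict_of_forall_mem (measurableSet_lt_abs_sub ε x) fun y (hy : ε < |y - x|) => ?_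
  have hsq : ε ^ 2 ≤ (y - x) ^ 2 := sq_le_sq.2 ((abs_of_pos hε).trans_le hy.le)
  have hpos : 0 < (y - x) ^ 2 := (pow_pos hε 2).trans_le hsq
  rw [Real.norm_of_nonneg (by positivity), ← div_eq_mul_inv, inv_eq_one_div,
    div_le_div_iff₀ hpos (by positivity)]
  have hone : 1 ≤ (ε ^ 2)⁻¹ * (y - x) ^ 2 := by
    rwa [inv_mul_eq_div, one_le_div (pow_pos hε 2)]
  linarith

lemma integrableOn_div_sq (hm : AEStronglyMeasurable h) (hb : ∃ C, ∀ y, |h y| ≤ C) (hε : 0 < ε) :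
    IntegrableOn (fun y => h y / (y - x) ^ 2) {y | ε < |y - x|} := by
  obtain ⟨C, hC⟩ := hb
  exact (integrableOn_inv_sq x hε).bdd_mul hm.restrict (Eventually.of_forall hC)

lemma integrable_div_sq (hm : AEStronglyMeasurable h) (hb : ∃ C, ∀ y, |h y| ≤ C)
    (hx : IntegrableAtFilter (fun y => h y / (y - x) ^ 2) (𝓝 x)) :
    Integrable fun y => h y / (y - x) ^ 2 :=
  integrable_of_integrableAtFilter_nhds hx fun _ => integrableOn_div_sq hm hb

lemma integrableAtFilter_div_sq_of_isBigO (hm : AEStronglyMeasurable h)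
    (hO : h =O[𝓝 x] fun y => (y - x) ^ 2) :
    IntegrableAtFilter (fun y => h y / (y - x) ^ 2) (𝓝 x) := by
  have hone : (fun y => h y / (y - x) ^ 2) =O[𝓝 x] fun _ => (1 : ℝ) := by
    obtain ⟨C, hC⟩ := hO.bound
    refine .of_bound |C| (hC.mono fun y hy => ?_)
    rw [norm_div, norm_one, mul_one]
    exact div_le_of_le_mul₀ (norm_nonneg _) (abs_nonneg C)
      (hy.trans (by gcongr; exact le_abs_self C))
  refine hone.integrableAtFilter ⟨univ, univ_mem, ?_⟩
    ((continuous_const.locallyIntegrable (μ := volume)) x)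
  exact (hm.div₀ (by fun_prop)).restrict

lemma exists_abs_comp_le {α : Type*} {f : α → ℝ} {φ : ℝ → ℝ} (hφ : Continuous φ)
    (hf : ∃ C, ∀ y, |f y| ≤ C) : ∃ C, ∀ y, |φ (f y)| ≤ C := by
  obtain ⟨C, hC⟩ := hf
  obtain ⟨D, hD⟩ := (isCompact_Icc (a := -C) (b := C)).exists_bound_of_continuousOn hφ.continuousOn
  exact ⟨D, fun y => hD _ (abs_le.1 (hC y))⟩

end QuotientBySquare

section HalfLaplacian

variable {f : ℝ → ℝ} {a x : ℝ}

lemma isBigO_sub_sub_deriv_mul (hf : ∀ᶠ y in 𝓝 x, DifferentiableAt ℝ f y)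
    (hf' : DifferentiableAt ℝ (deriv f) x) :
    (fun y => f y - f x - deriv f x * (y - x)) =O[𝓝 x] fun y => (y - x) ^ 2 := by
  set b := deriv (deriv f) x
  obtain ⟨r, hr, hball⟩ := Metric.eventually_nhds_iff_ball.1 hf
  have hder : ∀ y ∈ Metric.ball x r, HasDerivWithinAt
      (fun y => f y - deriv f x * (y - x) - b / 2 * (y - x) ^ 2)
      (deriv f y - deriv f x - b * (y - x)) (Metric.ball x r) y := fun y hy => by
    have hsub : HasDerivAt (fun y => y - x) 1 y := (hasDerivAt_id y).sub_const x
    refine (((hball y hy).hasDerivAt.sub (hsub.const_mul _)).sub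
      ((hsub.pow 2).const_mul _)).hasDerivWithinAt.congr_deriv ?_
    norm_num
    ring
  have hderiv_o : (fun y => deriv f y - deriv f x - b * (y - x)) =o[𝓝[Metric.ball x r] x]
      fun y => (y - x) ^ 1 := by
    have := hf'.hasDerivAt.isLittleO.mono (nhdsWithin_le_nhds (s := Metric.ball x r))
    simpa [b, mul_comm] using this
  have hpeano := (convex_ball x r).isLittleO_pow_succ_real (Metric.mem_ball_self hr) hder hderiv_o
  rw [nhdsWithin_eq_nhds.2 (Metric.ball_mem_nhds x hr)] at hpeano
  refine (hpeano.isBigO.add ((isBigO_refl _ _).const_mul_left (b / 2))).congr_left fun y => ?_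
  ring

lemma integrableAtFilter_taylor_div_sq (hm : AEStronglyMeasurable f) (hf : ContDiffAt ℝ 2 f x) :
    IntegrableAtFilter (fun y => (f y - f x - deriv f x * (y - x)) / (y - x) ^ 2) (𝓝 x) := by
  have hdiff : ∀ᶠ y in 𝓝 x, DifferentiableAt ℝ f y :=
    (hf.eventually (by simp)).mono fun y hy => hy.differentiableAt two_ne_zero
  have hderiv : DifferentiableAt ℝ (deriv f) x :=
    (hf.derivWithin one_add_one_eq_two.le).differentiableAt one_ne_zero
  exact integrableAtFilter_div_sq_of_isBigO (by fun_prop) (isBigO_sub_sub_deriv_mul hdiff hderiv)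

lemma pvAt_sin_div_sq (x : ℝ) : pvAt (fun y => Real.sin (y - x) / (y - x) ^ 2) x 0 := by
  refine pvAt_zero_of_odd_about (fun y => ?_) fun ε => integrableOn_div_sq
    (by fun_prop) ⟨1, fun y => Real.abs_sin_le_one _⟩
  rw [show 2 * x - y - x = -(y - x) by ring, Real.sin_neg, neg_sq, neg_div]

lemma integrableAtFilter_sin_sub_div_sq (x : ℝ) :
    IntegrableAtFilter (fun y => (Real.sin (y - x) - (y - x)) / (y - x) ^ 2) (𝓝 x) := by
  simpa [deriv_comp_sub_const] using integrableAtFilter_taylor_div_sq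
    (f := fun y => Real.sin (y - x)) (x := x) (by fun_prop) (by fun_prop)

lemma exists_pvAt_sub_div_sq (hm : AEStronglyMeasurable f) (hb : ∃ C, ∀ y, |f y| ≤ C)
    (hx : IntegrableAtFilter (fun y => (f y - f x - a * (y - x)) / (y - x) ^ 2) (𝓝 x)) :
    ∃ L, pvAt (fun y => (f y - f x) / (y - x) ^ 2) x L := by
  have hrem : Integrable fun y => (f y - f x - a * Real.sin (y - x)) / (y - x) ^ 2 := by
    refine integrable_div_sq ((hm.sub (by fun_prop)).sub (by fun_prop)) ?_ ?_
    · obtain ⟨C, hC⟩ := exists_abs_comp_le (continuous_id.sub continuous_const) hb (φ := (· - f x))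
      refine ⟨C + |a|, fun y => (abs_sub _ _).trans (add_le_add (hC y) ?_)⟩
      rw [abs_mul]
      exact mul_le_of_le_one_right (abs_nonneg a) (Real.abs_sin_le_one _)
    · convert! hx.sub ((integrableAtFilter_sin_sub_div_sq x).smul a) using 1
      ext y
      simp only [Pi.sub_apply, Pi.smul_apply, smul_eq_mul]
      ring
  have hpv := (pvAt_of_integrable x hrem).add ((pvAt_sin_div_sq x).const_mul a)
  simp only [mul_div_assoc', ← add_div, sub_add_cancel] at hpv
  exact ⟨_, hpv⟩

end HalfLaplacian

section ExponentialChangeOfVariables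

variable {S v φ : ℝ → ℝ} {x : ℝ}

lemma integrable_comp_sub_div_sq (hφ : Continuous φ) (hφ0 : φ =O[𝓝 0] fun t => t ^ 2)
    (hSm : AEStronglyMeasurable S) (hSb : ∃ C, ∀ y, |S y| ≤ C) (hSd : DifferentiableAt ℝ S x) :
    Integrable fun y => φ (S y - S x) / (y - x) ^ 2 := by
  have hm : AEStronglyMeasurable fun y => φ (S y - S x) :=
    hφ.comp_aestronglyMeasurable (hSm.sub aestronglyMeasurable_const)
  have hb := exists_abs_comp_le (hφ.comp (continuous_sub_right (S x))) hSb
  have htendsto : Tendsto (fun y => S y - S x) (𝓝 x) (𝓝 0) :=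
    tendsto_sub_nhds_zero_iff.2 hSd.continuousAt
  exact integrable_div_sq hm hb <| integrableAtFilter_div_sq_of_isBigO hm <|
    (hφ0.comp_tendsto htendsto).trans (hSd.isBigO_sub.pow 2)

lemma integrable_comp_sub_mul_sub_div_sq (hφ : Continuous φ) (hφ0 : φ =O[𝓝 0] fun t => t)
    (hSm : AEStronglyMeasurable S) (hSb : ∃ C, ∀ y, |S y| ≤ C) (hSd : DifferentiableAt ℝ S x)
    (hvm : AEStronglyMeasurable v) (hvb : ∃ C, ∀ y, |v y| ≤ C) (hvd : DifferentiableAt ℝ v x) :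
    Integrable fun y => φ (S y - S x) * (v y - v x) / (y - x) ^ 2 := by
  have hm : AEStronglyMeasurable fun y => φ (S y - S x) * (v y - v x) :=
    (hφ.comp_aestronglyMeasurable (hSm.sub aestronglyMeasurable_const)).mul
      (hvm.sub aestronglyMeasurable_const)
  obtain ⟨C, hC⟩ := exists_abs_comp_le (hφ.comp (continuous_sub_right (S x))) hSb
  obtain ⟨D, hD⟩ := exists_abs_comp_le (continuous_sub_right (v x)) hvb
  have hb : ∀ y, |φ (S y - S x) * (v y - v x)| ≤ C * D := fun y => by
    rw [abs_mul]
    exact mul_le_mul (hC y) (hD y) (abs_nonneg _) ((abs_nonneg _).trans (hC y))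
  have htendsto : Tendsto (fun y => S y - S x) (𝓝 x) (𝓝 0) :=
    tendsto_sub_nhds_zero_iff.2 hSd.continuousAt
  have hO : (fun y => φ (S y - S x) * (v y - v x)) =O[𝓝 x] fun y => (y - x) * (y - x) :=
    ((hφ0.comp_tendsto htendsto).trans hSd.isBigO_sub).mul hvd.isBigO_sub
  simp only [← sq] at hO
  exact integrable_div_sq hm ⟨_, hb⟩ (integrableAtFilter_div_sq_of_isBigO hm hO)

lemma pvAt_exp_mul_sub_div_sq {Lv LS : ℝ}
    (hLv : pvAt (fun y => (v y - v x) / (y - x) ^ 2) x Lv)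
    (hLS : pvAt (fun y => (S y - S x) / (y - x) ^ 2) x LS)
    (hZ : Integrable fun y => (Real.exp (S y - S x) - 1 - (S y - S x)) / (y - x) ^ 2)
    (hΞ : Integrable fun y => (Real.exp (S y - S x) - 1) * (v y - v x) / (y - x) ^ 2) :
    pvAt (fun y => (Real.exp (S y) * v y - Real.exp (S x) * v x) / (y - x) ^ 2) x
      (Real.exp (S x) * (Lv + v x * LS +
        (∫ y, (Real.exp (S y - S x) - 1) * (v y - v x) / (y - x) ^ 2) +
        v x * ∫ y, (Real.exp (S y - S x) - 1 - (S y - S x)) / (y - x) ^ 2)) := by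
  convert (((hLv.add (hLS.const_mul (v x))).add (pvAt_of_integrable x hΞ)).add
    ((pvAt_of_integrable x hZ).const_mul (v x))).const_mul (Real.exp (S x)) using 2 with y
  have hexp : Real.exp (S y) = Real.exp (S x) * Real.exp (S y - S x) := by
    rw [← Real.exp_add, add_sub_cancel]
  rw [hexp]
  ring

lemma isBigO_exp_sub_one : (fun t => Real.exp t - 1) =O[𝓝 0] fun t => t := by
  simpa using Real.exp_sub_sum_range_isBigO_pow 1

lemma isBigO_exp_sub_one_sub_id : (fun t => Real.exp t - 1 - t) =O[𝓝 0] fun t => t ^ 2 := by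
  simpa [Finset.sum_range_succ, sub_sub] using Real.exp_sub_sum_range_isBigO_pow 2

/-- `hSx` and `hvx` are Dini-type conditions: they hold as soon as `S` and `v` are `C^(1,α)` near `x`
for some `α > 0`. -/
theorem half_laplacian_change_of_variables_general
    (hSm : AEStronglyMeasurable S) (hSb : ∃ C, ∀ y, |S y| ≤ C) (hSd : DifferentiableAt ℝ S x)
    (hSx : IntegrableAtFilter (fun y => (S y - S x - deriv S x * (y - x)) / (y - x) ^ 2) (𝓝 x))
    (hvm : AEStronglyMeasurable v) (hvb : ∃ C, ∀ y, |v y| ≤ C) (hvd : DifferentiableAt ℝ v x)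
    (hvx : IntegrableAtFilter (fun y => (v y - v x - deriv v x * (y - x)) / (y - x) ^ 2) (𝓝 x)) :
    ∃ Lv LS LE : ℝ,
      pvAt (fun y => (v y - v x) / (y - x) ^ 2) x Lv ∧
      pvAt (fun y => (S y - S x) / (y - x) ^ 2) x LS ∧
      pvAt (fun y =>
        (Real.exp (S y) * v y - Real.exp (S x) * v x) / (y - x) ^ 2) x LE ∧
      Integrable (fun y =>
        (Real.exp (S y - S x) - 1 - (S y - S x)) / (y - x) ^ 2) ∧
      Integrable (fun y =>
        (Real.exp (S y - S x) - 1) * (v y - v x) / (y - x) ^ 2) ∧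
      Real.exp (-S x) * ((1 / Real.pi) * LE)
        = (1 / Real.pi) * Lv + v x * ((1 / Real.pi) * LS) +
          (1 / Real.pi) *
            (∫ y : ℝ, (Real.exp (S y - S x) - 1) * (v y - v x) / (y - x) ^ 2) +
          ((1 / Real.pi) *
            (∫ y : ℝ, (Real.exp (S y - S x) - 1 - (S y - S x)) / (y - x) ^ 2)) *
            v x := by
  obtain ⟨Lv, hLv⟩ := exists_pvAt_sub_div_sq hvm hvb hvx
  obtain ⟨LS, hLS⟩ := exists_pvAt_sub_div_sq hSm hSb hSx
  have hZ := integrable_comp_sub_div_sq (by fun_prop) isBigO_exp_sub_one_sub_id hSm hSb hSd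
  have hΞ := integrable_comp_sub_mul_sub_div_sq (by fun_prop) isBigO_exp_sub_one hSm hSb hSd
    hvm hvb hvd
  refine ⟨Lv, LS, _, hLv, hLS, pvAt_exp_mul_sub_div_sq hLv hLS hZ hΞ, hZ, hΞ, ?_⟩
  rw [Real.exp_neg]
  field_simp

end ExponentialChangeOfVariables

/-- The change of variables underlying `u = e^S v` for the fractional parabolic
Anderson model: for `S` smooth with `S, S'` bounded and `v` smooth with compact
support, the principal values defining `Λv(x)`, `ΛS(x)`, `Λ(e^S v)(x)` exist, the
integrals defining `Z̃(x)` and `Ξv(x)` converge absolutely, and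
`e^(-S(x)) Λ(e^S v)(x) = Λv(x) + v(x) ΛS(x) + Ξv(x) + Z̃(x) v(x)`. -/
theorem half_laplacian_change_of_variables
    (S : ℝ → ℝ) (hS : ContDiff ℝ (⊤ : ℕ∞) S)
    (hSbdd : ∃ M, ∀ x, |S x| ≤ M) (hS'bdd : ∃ M, ∀ x, |deriv S x| ≤ M)
    (v : ℝ → ℝ) (hv : ContDiff ℝ (⊤ : ℕ∞) v) (hvsupp : HasCompactSupport v) :
    ∀ x : ℝ, ∃ Lv LS LE : ℝ,
      pvAt (fun y => (v y - v x) / (y - x) ^ 2) x Lv ∧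
      pvAt (fun y => (S y - S x) / (y - x) ^ 2) x LS ∧
      pvAt (fun y =>
        (Real.exp (S y) * v y - Real.exp (S x) * v x) / (y - x) ^ 2) x LE ∧
      Integrable (fun y =>
        (Real.exp (S y - S x) - 1 - (S y - S x)) / (y - x) ^ 2) ∧
      Integrable (fun y =>
        (Real.exp (S y - S x) - 1) * (v y - v x) / (y - x) ^ 2) ∧
      Real.exp (-S x) * ((1 / Real.pi) * LE)
        = (1 / Real.pi) * Lv + v x * ((1 / Real.pi) * LS) +
          (1 / Real.pi) *
            (∫ y : ℝ, (Real.exp (S y - S x) - 1) * (v y - v x) / (y - x) ^ 2) +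
          ((1 / Real.pi) *
            (∫ y : ℝ, (Real.exp (S y - S x) - 1 - (S y - S x)) / (y - x) ^ 2)) *
            v x := by
  have hS2 : ContDiff ℝ 2 S := mod_cast contDiff_infty.1 hS 2
  have hv2 : ContDiff ℝ 2 v := mod_cast contDiff_infty.1 hv 2
  have hSm : AEStronglyMeasurable S := hS.continuous.aestronglyMeasurable
  have hvm : AEStronglyMeasurable v := hv.continuous.aestronglyMeasurable
  exact fun x => half_laplacian_change_of_variables_general
    hSm hSbdd (hS2.differentiable two_ne_zero x)
    (integrableAtFilter_taylor_div_sq hSm hS2.contDiffAt)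
    hvm (hv.continuous.bounded_above_of_compact_support hvsupp)
    (hv2.differentiable two_ne_zero x) (integrableAtFilter_taylor_div_sq hvm hv2.contDiffAt)
end

section
/- Let κ ∈ (0,1/4) and T > 0. There is a constant C < ∞ such that the following holds. Let g: ℝ → ℝ be bounded and continuous with N_{−κ}(g) < ∞, and let v: (0,T] × ℝ → ℝ be jointly continuous with each v(s,·) bounded and sup_{s∈(0,T]} s^{1−κ} ‖v(s,·)‖_{C^{1/2+κ}} < ∞. Then for every t ∈ (0,T] the function w(t,x) := ∫_0^t (P_{t−s} ∗ (v(s,·)·g))(x) ds is well-defined, and sup_{t∈(0,T]} t^{1−κ} ‖w(t,·)‖_{C^{1/2+κ}} ≤ C N_{−κ}(g) T^{1/2−2κ} · sup_{s∈(0,T]} s^{1−κ} ‖v(s,·)‖_{C^{1/2+κ}}. -/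
open MeasureTheory

/-- The Cauchy kernel `P_t(x) = t / (π (t² + x²))`. -/
noncomputable def cauchyKer (t x : ℝ) : ℝ := t / (Real.pi * (t ^ 2 + x ^ 2))

/-- A test function: `C¹`, supported in `[-1,1]`, with `sup |η| ≤ 1`. -/
def IsTestFn (η : ℝ → ℝ) : Prop :=
  ContDiff ℝ 1 η ∧ (∀ y, y ∉ Set.Icc (-1 : ℝ) 1 → η y = 0) ∧ ∀ y, |η y| ≤ 1

/-- The set whose supremum is the `C^α` distributional norm `N_α(f)`. -/
noncomputable def distSet (α : ℝ) (f : ℝ → ℝ) : Set ℝ :=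
  {r | ∃ (x l : ℝ) (η : ℝ → ℝ), 0 < l ∧ l ≤ 1 ∧ IsTestFn η ∧
    r = l ^ (-α) * |∫ y : ℝ, f y * (l⁻¹ * η (l⁻¹ * (y - x)))|}

/-- The `C^α`-Hölder norm of `f` as a distribution. -/
noncomputable def distNorm (α : ℝ) (f : ℝ → ℝ) : ℝ := sSup (distSet α f)

/-!
A test function may be any `C¹` function bounded by `1`, in particular nearly the sign of `g` near
a point; hence `N_α(g)` controls the average of `|g|`, not only of `g`, over an interval of length
`l ≤ 1` by `l ^ α`. The Cauchy kernel `P_r` varies by at most a constant factor at scale `r`, so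
averaging over translates gives `P_r ∗ |g| ≲ N_α(g) r ^ α`. Interpolating between the trivial bound
and the gradient bound, `|P_r(x) - P_r(z)| ≤ (|x - z| / r) ^ γ (P_r(x) + P_r(z))`. For
`|v(s,·)| ≤ V s ^ (-β)` the value and the `γ`-Hölder quotient of the Duhamel integral are therefore
bounded by the Beta integrals of `(t - s) ^ α s ^ (-β)` and `(t - s) ^ (α - γ) s ^ (-β)`, which
converge for `β < 1` and `γ < 1 + α`.
-/

section CauchyKernel

variable {r : ℝ}

lemma cauchyKer_nonneg (hr : 0 ≤ r) (x : ℝ) : 0 ≤ cauchyKer r x := by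
  unfold cauchyKer
  positivity

lemma measurable_uncurry_cauchyKer : Measurable (Function.uncurry cauchyKer) := by
  unfold Function.uncurry cauchyKer
  fun_prop

lemma cauchyKer_sub_eq_cauchyPDFReal (hr : 0 ≤ r) (x : ℝ) :
    (fun y => cauchyKer r (x - y)) = ProbabilityTheory.cauchyPDFReal x r.toNNReal := by
  ext y
  rw [ProbabilityTheory.cauchyPDFReal_def, Real.coe_toNNReal r hr, cauchyKer, div_eq_mul_inv,
    mul_inv, add_comm, ← neg_sub y x, neg_sq]
  ring

lemma lintegral_cauchyKer_sub (hr : 0 < r) (x : ℝ) :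
    ∫⁻ y, ENNReal.ofReal (cauchyKer r (x - y)) = 1 := by
  have hr' : r.toNNReal ≠ 0 := (Real.toNNReal_pos.2 hr).ne'
  rw [← ProbabilityTheory.lintegral_cauchyPDF_eq_one x hr']
  simp only [ProbabilityTheory.cauchyPDF, ← cauchyKer_sub_eq_cauchyPDFReal hr.le]

lemma cauchyKer_le_three_mul (hr : 0 < r) {a b : ℝ} (hab : |a - b| ≤ r) :
    cauchyKer r a ≤ 3 * cauchyKer r b := by
  have hsq : (a - b) ^ 2 ≤ r ^ 2 := sq_le_sq' (by linarith [(abs_le.1 hab).1]) (abs_le.1 hab).2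
  have hden : r ^ 2 + b ^ 2 ≤ 3 * (r ^ 2 + a ^ 2) := by nlinarith [sq_nonneg (a + (a - b))]
  unfold cauchyKer
  rw [mul_div_assoc', div_le_div_iff₀ (by positivity) (by positivity)]
  calc r * (Real.pi * (r ^ 2 + b ^ 2)) ≤ r * (Real.pi * (3 * (r ^ 2 + a ^ 2))) := by gcongr
    _ = 3 * r * (Real.pi * (r ^ 2 + a ^ 2)) := by ring

lemma abs_cauchyKer_sub_le_div_mul (hr : 0 < r) (a b : ℝ) :
    |cauchyKer r a - cauchyKer r b| ≤ |a - b| / r * (cauchyKer r a + cauchyKer r b) := by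
  set D := r / (Real.pi * ((r ^ 2 + a ^ 2) * (r ^ 2 + b ^ 2)))
  have hD : 0 ≤ D := by positivity
  have hsub : cauchyKer r a - cauchyKer r b = (a - b) / r * (-(a + b) * r * D) := by
    simp only [cauchyKer, D]
    field_simp
    ring
  have hadd : cauchyKer r a + cauchyKer r b = (2 * r ^ 2 + a ^ 2 + b ^ 2) * D := by
    simp only [cauchyKer, D]
    field_simp
    ring
  have hnum : |-(a + b) * r| ≤ 2 * r ^ 2 + a ^ 2 + b ^ 2 :=
    abs_le.2 ⟨by nlinarith [sq_nonneg (r - a), sq_nonneg (r - b)],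
      by nlinarith [sq_nonneg (r + a), sq_nonneg (r + b)]⟩
  rw [hsub, hadd, abs_mul, abs_div, abs_of_pos hr, abs_mul _ D, abs_of_nonneg hD]
  gcongr

lemma min_one_le_rpow {d γ : ℝ} (hd : 0 ≤ d) (hγ0 : 0 ≤ γ) (hγ1 : γ ≤ 1) :
    min 1 d ≤ d ^ γ := by
  rcases le_total 1 d with h | h
  · exact (min_le_left 1 d).trans (Real.one_le_rpow h hγ0)
  · exact (min_le_right 1 d).trans (Real.self_le_rpow_of_le_one hd h hγ1)

lemma abs_cauchyKer_sub_le (hr : 0 < r) {γ : ℝ} (hγ0 : 0 ≤ γ) (hγ1 : γ ≤ 1) (a b : ℝ) :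
    |cauchyKer r a - cauchyKer r b| ≤
      (|a - b| / r) ^ γ * (cauchyKer r a + cauchyKer r b) := by
  have ha := cauchyKer_nonneg hr.le a
  have hb := cauchyKer_nonneg hr.le b
  have htriv : |cauchyKer r a - cauchyKer r b| ≤ 1 * (cauchyKer r a + cauchyKer r b) :=
    abs_le.2 ⟨by linarith, by linarith⟩
  calc |cauchyKer r a - cauchyKer r b|
      ≤ min 1 (|a - b| / r) * (cauchyKer r a + cauchyKer r b) := by
        rw [min_mul_of_nonneg _ _ (add_nonneg ha hb)]
        exact le_min htriv (abs_cauchyKer_sub_le_div_mul hr a b)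
    _ ≤ (|a - b| / r) ^ γ * (cauchyKer r a + cauchyKer r b) := by
        gcongr
        exact min_one_le_rpow (by positivity) hγ0 hγ1

end CauchyKernel

section LocalMass

lemma IsTestFn.hasCompactSupport {η : ℝ → ℝ} (hη : IsTestFn η) : HasCompactSupport η :=
  .intro isCompact_Icc hη.2.1

lemma IsTestFn.integrable_mul {η G : ℝ → ℝ} (hη : IsTestFn η) (hG : Continuous G) :
    Integrable fun z => G z * η z :=
  (hG.mul hη.1.continuous).integrable_of_hasCompactSupport hη.hasCompactSupport.mul_left

lemma abs_sub_le_mul_div_sqrt (x : ℝ) {ε : ℝ} (hε : 0 < ε) :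
    |x| - ε ≤ x * (x / √(x ^ 2 + ε ^ 2)) := by
  set R := √(x ^ 2 + ε ^ 2)
  have hR : 0 < R := by positivity
  have hsq : R ^ 2 = x ^ 2 + ε ^ 2 := Real.sq_sqrt (by positivity)
  have hxR : |x| ≤ R := Real.abs_le_sqrt (by linarith [sq_nonneg ε])
  have hεR : ε ≤ R := Real.le_sqrt_of_sq_le (by linarith [sq_nonneg x])
  rw [mul_div_assoc', le_div_iff₀ hR]
  nlinarith

-- `G` is only continuous, so `σ` is the smoothed sign of a `C¹` approximation `p` of `G`.
lemma exists_contDiff_abs_le_mul_add {G : ℝ → ℝ} (hG : Continuous G) {ε : ℝ} (hε : 0 < ε) :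
    ∃ σ : ℝ → ℝ, ContDiff ℝ 1 σ ∧ (∀ z, |σ z| ≤ 1) ∧ ∀ z, |G z| ≤ G z * σ z + ε := by
  obtain ⟨δ, hδ, rfl⟩ : ∃ δ > 0, ε = 3 * δ := ⟨ε / 3, by positivity, by ring⟩
  obtain ⟨p, hp, hpG, -⟩ :=
    hG.exists_contDiff_approx 1 (ε := fun _ => δ) continuous_const fun _ => hδ
  let σ : ℝ → ℝ := fun z => p z / √(p z ^ 2 + δ ^ 2)
  have hσ : ∀ z, |σ z| ≤ 1 := fun z => by
    rw [abs_div, abs_of_nonneg (Real.sqrt_nonneg _)]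
    exact div_le_one_of_le₀ (Real.abs_le_sqrt (by linarith [sq_nonneg δ])) (Real.sqrt_nonneg _)
  refine ⟨σ, hp.div (((hp.pow 2).add contDiff_const).sqrt fun z => by positivity)
    fun z => by positivity, hσ, fun z => ?_⟩
  have hclose : |p z - G z| ≤ δ := (hpG z).le
  have herr : |(p z - G z) * σ z| ≤ δ := by
    rw [abs_mul]
    exact (mul_le_of_le_one_right (abs_nonneg _) (hσ z)).trans hclose
  have hsign : |p z| - δ ≤ p z * σ z := abs_sub_le_mul_div_sqrt (p z) hδ
  linarith [abs_sub_abs_le_abs_sub (G z) (p z), abs_sub_comm (G z) (p z),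
    le_abs_self ((p z - G z) * σ z), sub_mul (p z) (G z) (σ z)]

lemma exists_isTestFn_indicator_abs_le {G : ℝ → ℝ} (hG : Continuous G) {ε : ℝ} (hε : 0 < ε) :
    ∃ η, IsTestFn η ∧ ∀ z, (Set.Icc (-(1 / 2)) (1 / 2)).indicator (fun z => |G z|) z ≤
      G z * η z + (Set.Icc (-1) 1).indicator (fun _ => ε) z := by
  obtain ⟨σ, hσ, hσ1, hGσ⟩ := exists_contDiff_abs_le_mul_add hG hε
  let χ : ContDiffBump (0 : ℝ) := ⟨1 / 2, 1, by norm_num, by norm_num⟩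
  have hχ : ∀ z ∉ Set.Icc (-1 : ℝ) 1, χ z = 0 := fun z hz =>
    χ.zero_of_le_dist <| by
      rw [dist_zero_right]
      exact le_of_not_ge fun h => hz (abs_le.1 h)
  refine ⟨fun z => χ z * σ z, ⟨χ.contDiff.mul hσ, fun z hz => by simp [hχ z hz], fun z => ?_⟩,
    fun z => ?_⟩
  · rw [abs_mul, abs_of_nonneg χ.nonneg]
    exact mul_le_one₀ χ.le_one (abs_nonneg _) (hσ1 z)
  · have hinner : (Set.Icc (-(1 / 2)) (1 / 2)).indicator (fun z => |G z|) z ≤ χ z * |G z| := by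
      refine Set.indicator_apply_le' (fun hz => ?_) fun _ => mul_nonneg χ.nonneg (abs_nonneg _)
      have hz' : z ∈ Metric.closedBall 0 χ.rIn := mem_closedBall_zero_iff.2 (abs_le.2 hz)
      rw [χ.one_of_mem_closedBall hz', one_mul]
    have houter : χ z * ε ≤ (Set.Icc (-1) 1).indicator (fun _ => ε) z := by
      by_cases hz : z ∈ Set.Icc (-1) 1
      · rw [Set.indicator_of_mem hz]
        exact mul_le_of_le_one_left hε.le χ.le_one
      · rw [Set.indicator_of_notMem hz, hχ z hz, zero_mul]
    linarith [mul_le_mul_of_nonneg_left (hGσ z) (χ.nonneg (x := z))]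

lemma setIntegral_abs_le_of_forall_isTestFn {G : ℝ → ℝ} (hG : Continuous G) {B : ℝ}
    (hB : ∀ η, IsTestFn η → ∫ z, G z * η z ≤ B) :
    ∫ z in Set.Icc (-(1 / 2)) (1 / 2), |G z| ≤ B := by
  refine le_of_forall_pos_le_add fun ε hε => ?_
  obtain ⟨η, hη, hle⟩ := exists_isTestFn_indicator_abs_le hG (half_pos hε)
  have hε_int : Integrable ((Set.Icc (-1 : ℝ) 1).indicator fun _ => ε / 2) :=
    (integrable_indicator_iff measurableSet_Icc).2 (integrableOn_const (by simp))
  calc ∫ z in Set.Icc (-(1 / 2)) (1 / 2), |G z|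
      = ∫ z, (Set.Icc (-(1 / 2)) (1 / 2)).indicator (fun z => |G z|) z :=
        (integral_indicator measurableSet_Icc).symm
    _ ≤ ∫ z, (G z * η z + (Set.Icc (-1) 1).indicator (fun _ => ε / 2) z) :=
        integral_mono ((integrable_indicator_iff measurableSet_Icc).2
          hG.abs.continuousOn.integrableOn_Icc) ((hη.integrable_mul hG).add hε_int) hle
    _ = (∫ z, G z * η z) + ε := by
        rw [integral_add (hη.integrable_mul hG) hε_int, integral_indicator measurableSet_Icc,
          setIntegral_const, Real.volume_real_Icc_of_le (by norm_num), smul_eq_mul]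
        ring
    _ ≤ B + ε := by gcongr; exact hB η hη

lemma integral_mul_rescale (g η : ℝ → ℝ) {l : ℝ} (hl : 0 < l) (x : ℝ) :
    ∫ y, g y * (l⁻¹ * η (l⁻¹ * (y - x))) = ∫ z, g (x + l * z) * η z := by
  let F : ℝ → ℝ := fun z => l⁻¹ * (g (x + l * z) * η z)
  calc ∫ y, g y * (l⁻¹ * η (l⁻¹ * (y - x))) = ∫ y, F (l⁻¹ * (y - x)) := by
        refine integral_congr_ae (.of_forall fun y => ?_)
        simp only [F, mul_inv_cancel_left₀ hl.ne', add_sub_cancel]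
        ring
    _ = ∫ z, g (x + l * z) * η z := by
        rw [integral_sub_right_eq_self (fun y => F (l⁻¹ * y)), Measure.integral_comp_inv_mul_left,
          integral_const_mul, abs_of_pos hl, smul_eq_mul, mul_inv_cancel_left₀ hl.ne']

variable {α : ℝ} {g : ℝ → ℝ} {l : ℝ}

lemma distNorm_nonneg (α : ℝ) (g : ℝ → ℝ) : 0 ≤ distNorm α g := by
  refine Real.sSup_nonneg ?_
  rintro _ ⟨x, l, η, hl, -, -, rfl⟩
  positivity

lemma abs_integral_comp_mul_isTestFn_le (hN : BddAbove (distSet α g)) {η : ℝ → ℝ}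
    (hη : IsTestFn η) (hl : 0 < l) (hl1 : l ≤ 1) (x : ℝ) :
    |∫ z, g (x + l * z) * η z| ≤ distNorm α g * l ^ α := by
  have h : l ^ (-α) * |∫ y, g y * (l⁻¹ * η (l⁻¹ * (y - x)))| ≤ distNorm α g :=
    le_csSup hN ⟨x, l, η, hl, hl1, hη, rfl⟩
  rwa [integral_mul_rescale g η hl, Real.rpow_neg hl.le, inv_mul_le_iff₀ (by positivity),
    mul_comm] at h

lemma setLIntegral_enorm_comp_le_distNorm (hg : Continuous g) (hN : BddAbove (distSet α g))
    (hl : 0 < l) (hl1 : l ≤ 1) (x : ℝ) :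
    ∫⁻ z in Set.Icc (-(1 / 2)) (1 / 2), ‖g (x + l * z)‖ₑ ≤
      ENNReal.ofReal (distNorm α g * l ^ α) := by
  have hG : Continuous fun z => g (x + l * z) := by fun_prop
  rw [← ofReal_integral_norm_eq_lintegral_enorm hG.continuousOn.integrableOn_Icc]
  exact ENNReal.ofReal_le_ofReal <| setIntegral_abs_le_of_forall_isTestFn hG fun η hη =>
    (le_abs_self _).trans (abs_integral_comp_mul_isTestFn_le hN hη hl hl1 x)

end LocalMass

section Convolution

/-- The convolution `(P_r ∗ h)(x)` with the Cauchy kernel; it is `0` when the integrand is not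
integrable. -/
noncomputable def cauchyConv (r : ℝ) (h : ℝ → ℝ) (x : ℝ) : ℝ :=
  ∫ y, cauchyKer r (x - y) * h y

variable {r : ℝ} {h : ℝ → ℝ}

lemma abs_cauchyConv_le (hr : 0 ≤ r) (h : ℝ → ℝ) (x : ℝ) :
    |cauchyConv r h x| ≤ cauchyConv r (fun y => |h y|) x := by
  unfold cauchyConv
  refine abs_integral_le_integral_abs.trans_eq (integral_congr_ae (.of_forall fun y => ?_))
  simp only [abs_mul, abs_of_nonneg (cauchyKer_nonneg hr _)]

lemma integrable_cauchyKer_mul_abs (hr : 0 ≤ r) {x : ℝ}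
    (hh : Integrable fun y => cauchyKer r (x - y) * h y) :
    Integrable fun y => cauchyKer r (x - y) * |h y| := by
  simpa only [abs_mul, abs_of_nonneg (cauchyKer_nonneg hr _)] using hh.abs

lemma abs_cauchyConv_sub_le (hr : 0 < r) {γ : ℝ} (hγ0 : 0 ≤ γ) (hγ1 : γ ≤ 1) {x z : ℝ}
    (hx : Integrable fun y => cauchyKer r (x - y) * h y)
    (hz : Integrable fun y => cauchyKer r (z - y) * h y) :
    |cauchyConv r h x - cauchyConv r h z| ≤ (|x - z| / r) ^ γ *
      (cauchyConv r (fun y => |h y|) x + cauchyConv r (fun y => |h y|) z) := by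
  have hx' := integrable_cauchyKer_mul_abs hr.le hx
  have hz' := integrable_cauchyKer_mul_abs hr.le hz
  unfold cauchyConv
  rw [← integral_sub hx hz, ← integral_add hx' hz', ← integral_const_mul,
    ← Real.norm_eq_abs]
  refine norm_integral_le_of_norm_le ((hx'.add hz').const_mul _) (.of_forall fun y => ?_)
  have hker := abs_cauchyKer_sub_le hr hγ0 hγ1 (x - y) (z - y)
  rw [sub_sub_sub_cancel_right] at hker
  rw [← sub_mul, Real.norm_eq_abs, abs_mul, ← add_mul, ← mul_assoc]
  gcongr

lemma integrable_cauchyKer_mul_mul {u : ℝ → ℝ} (hu : AEStronglyMeasurable u) {U : ℝ}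
    (hU : ∀ y, |u y| ≤ U) {x : ℝ} (hh : Integrable fun y => cauchyKer r (x - y) * h y) :
    Integrable fun y => cauchyKer r (x - y) * (u y * h y) := by
  simpa only [mul_left_comm] using hh.bdd_mul hu (.of_forall hU)

lemma cauchyConv_abs_mul_le (hr : 0 ≤ r) {u : ℝ → ℝ} {U : ℝ} (hU : ∀ y, |u y| ≤ U) {x : ℝ}
    (hh : Integrable fun y => cauchyKer r (x - y) * h y) :
    cauchyConv r (fun y => |u y * h y|) x ≤ U * cauchyConv r (fun y => |h y|) x := by
  have hker := fun y => cauchyKer_nonneg hr (x - y)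
  unfold cauchyConv
  rw [← integral_const_mul]
  refine integral_mono_of_nonneg (.of_forall fun y => mul_nonneg (hker y) (abs_nonneg _))
    ((integrable_cauchyKer_mul_abs hr hh).const_mul U) (.of_forall fun y => ?_)
  calc cauchyKer r (x - y) * |u y * h y| = |u y| * (cauchyKer r (x - y) * |h y|) := by
        rw [abs_mul, mul_left_comm]
    _ ≤ U * (cauchyKer r (x - y) * |h y|) :=
        mul_le_mul_of_nonneg_right (hU y) (mul_nonneg (hker y) (abs_nonneg _))

lemma aestronglyMeasurable_cauchyConv {μ : Measure ℝ} {f : ℝ → ℝ → ℝ}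
    (hf : AEStronglyMeasurable (Function.uncurry f) (μ.prod volume)) {ρ : ℝ → ℝ}
    (hρ : Measurable ρ) (x : ℝ) :
    AEStronglyMeasurable (fun s => cauchyConv (ρ s) (f s) x) μ := by
  have hker : Measurable fun p : ℝ × ℝ => cauchyKer (ρ p.1) (x - p.2) :=
    measurable_uncurry_cauchyKer.comp (by fun_prop : Measurable fun p : ℝ × ℝ => (ρ p.1, x - p.2))
  have hint := (hker.aestronglyMeasurable.mul hf).integral_prod_right'
  exact hint

variable {α : ℝ} {g : ℝ → ℝ} {l : ℝ}

-- Averaging `∫ P_r(x - y) |g y| dy` over the translates `y = w + l z`, `|z| ≤ 1 / 2`, costs a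
-- factor `3` and replaces `|g|` by its local averages at scale `l`.
lemma lintegral_enorm_cauchyKer_mul_le_distNorm (hg : Continuous g) (hN : BddAbove (distSet α g))
    (hl : 0 < l) (hl1 : l ≤ 1) (hlr : l ≤ r) (x : ℝ) :
    ∫⁻ y, ‖cauchyKer r (x - y) * g y‖ₑ ≤ ENNReal.ofReal (3 * (distNorm α g * l ^ α)) := by
  have hr : 0 < r := hl.trans_le hlr
  let J : Set ℝ := Set.Icc (-(1 / 2)) (1 / 2)
  let K : ℝ → ENNReal := fun w => ENNReal.ofReal (3 * cauchyKer r (x - w))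
  have hK : Measurable K := by
    have := measurable_uncurry_cauchyKer.of_uncurry_left (x := r)
    fun_prop
  have htranslate : ∀ z ∈ J, ∫⁻ y, ‖cauchyKer r (x - y) * g y‖ₑ ≤
      ∫⁻ w, K w * ‖g (w + l * z)‖ₑ := fun z hz => by
    rw [← lintegral_add_right_eq_self _ (l * z)]
    refine lintegral_mono fun w => ?_
    have hlz : |x - (w + l * z) - (x - w)| ≤ r := by
      rw [sub_sub_sub_cancel_left, sub_add_cancel_left, abs_neg, abs_mul, abs_of_pos hl]
      nlinarith [abs_le.2 hz]
    rw [enorm_mul, Real.enorm_of_nonneg (cauchyKer_nonneg hr.le _)]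
    gcongr
    exact ENNReal.ofReal_le_ofReal (cauchyKer_le_three_mul hr hlz)
  calc ∫⁻ y, ‖cauchyKer r (x - y) * g y‖ₑ
      = ∫⁻ _ in J, ∫⁻ y, ‖cauchyKer r (x - y) * g y‖ₑ := by
        norm_num [J, Real.volume_Icc]
    _ ≤ ∫⁻ z in J, ∫⁻ w, K w * ‖g (w + l * z)‖ₑ := setLIntegral_mono' measurableSet_Icc htranslate
    _ = ∫⁻ w, ∫⁻ z in J, K w * ‖g (w + l * z)‖ₑ := by
        refine lintegral_lintegral_swap (Measurable.aemeasurable ?_)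
        exact (hK.comp measurable_snd).mul (Continuous.measurable (by fun_prop)).enorm
    _ ≤ ∫⁻ w, K w * ENNReal.ofReal (distNorm α g * l ^ α) := lintegral_mono fun w => by
        rw [lintegral_const_mul _ (Continuous.measurable (by fun_prop)).enorm]
        gcongr
        exact setLIntegral_enorm_comp_le_distNorm hg hN hl hl1 w
    _ = ENNReal.ofReal (3 * (distNorm α g * l ^ α)) := by
        rw [lintegral_mul_const _ hK]
        simp only [K, ENNReal.ofReal_mul zero_le_three]
        rw [lintegral_const_mul' _ _ ENNReal.ofReal_ne_top, lintegral_cauchyKer_sub hr, mul_one]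

lemma integrable_cauchyKer_mul_of_bddAbove_distSet (hg : Continuous g)
    (hN : BddAbove (distSet α g)) (hr : 0 < r) (x : ℝ) :
    Integrable fun y => cauchyKer r (x - y) * g y := by
  have hker : Measurable fun y => cauchyKer r (x - y) :=
    measurable_uncurry_cauchyKer.of_uncurry_left.comp (measurable_const.sub measurable_id)
  exact ⟨(hker.mul hg.measurable).aestronglyMeasurable,
    (lintegral_enorm_cauchyKer_mul_le_distNorm hg hN (lt_min hr one_pos) (min_le_right r 1)
      (min_le_left r 1) x).trans_lt ENNReal.ofReal_lt_top⟩

lemma cauchyConv_abs_le_distNorm (hg : Continuous g) (hN : BddAbove (distSet α g))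
    (hl : 0 < l) (hl1 : l ≤ 1) (hlr : l ≤ r) (x : ℝ) :
    cauchyConv r (fun y => |g y|) x ≤ 3 * (distNorm α g * l ^ α) := by
  have hr : 0 < r := hl.trans_le hlr
  have hB : 0 ≤ distNorm α g * l ^ α := mul_nonneg (distNorm_nonneg α g) (by positivity)
  rw [← ENNReal.ofReal_le_ofReal_iff (by positivity)]
  refine Eq.trans_le ?_ (lintegral_enorm_cauchyKer_mul_le_distNorm hg hN hl hl1 hlr x)
  rw [← ofReal_integral_norm_eq_lintegral_enorm
    (integrable_cauchyKer_mul_of_bddAbove_distSet hg hN hr x)]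
  simp only [cauchyConv, Real.norm_eq_abs, abs_mul, abs_of_nonneg (cauchyKer_nonneg hr.le _)]

lemma cauchyConv_abs_mul_le_rpow (hg : Continuous g) (hN : BddAbove (distSet α g)) {m : ℝ}
    (hm : 1 ≤ m) (hr : 0 < r) (hrm : r ≤ m) {u : ℝ → ℝ} {U : ℝ} (hU : ∀ y, |u y| ≤ U) (x : ℝ) :
    cauchyConv r (fun y => |u y * g y|) x ≤ U * (3 * distNorm α g * m ^ (-α) * r ^ α) := by
  have hm0 : 0 < m := one_pos.trans_le hm
  have hU0 : 0 ≤ U := (abs_nonneg _).trans (hU 0)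
  calc cauchyConv r (fun y => |u y * g y|) x ≤ U * cauchyConv r (fun y => |g y|) x :=
        cauchyConv_abs_mul_le hr.le hU (integrable_cauchyKer_mul_of_bddAbove_distSet hg hN hr x)
    _ ≤ U * (3 * (distNorm α g * (r / m) ^ α)) := by
        gcongr
        exact cauchyConv_abs_le_distNorm hg hN (by positivity) ((div_le_one hm0).2 hrm)
          (div_le_self hr.le hm) x
    _ = U * (3 * distNorm α g * m ^ (-α) * r ^ α) := by
        rw [Real.div_rpow hr.le hm0.le, Real.rpow_neg hm0.le]
        ring

end Convolution

section TimeIntegral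

variable {a b t : ℝ}

lemma setIntegral_rpow_mul_rpow_eq_beta (ha : -1 < a) (hb : -1 < b) (ht : 0 < t) :
    ∫ s in Set.Ioo 0 t, (t - s) ^ a * s ^ b =
      t ^ (a + b + 1) * ProbabilityTheory.beta (b + 1) (a + 1) := by
  have hcast : ((∫ s in (0 : ℝ)..t, (t - s) ^ a * s ^ b : ℝ) : ℂ) =
      (t : ℂ) ^ ((b + 1 : ℝ) + (a + 1 : ℝ) - 1 : ℂ) *
        Complex.betaIntegral (b + 1 : ℝ) (a + 1 : ℝ) := by
    rw [← Complex.betaIntegral_scaled _ _ ht, ← intervalIntegral.integral_ofReal]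
    refine intervalIntegral.integral_congr fun s hs => ?_
    rw [Set.uIcc_of_le ht.le] at hs
    simp [Complex.ofReal_cpow hs.1, Complex.ofReal_cpow (sub_nonneg.2 hs.2), mul_comm]
  rw [← integral_Ioc_eq_integral_Ioo, ← intervalIntegral.integral_of_le ht.le,
    ProbabilityTheory.beta_eq_betaIntegralReal _ _ (by linarith) (by linarith),
    ← Complex.re_ofReal_mul, ← Complex.ofReal_re (∫ s in (0 : ℝ)..t, _), hcast,
    Complex.ofReal_cpow ht.le]
  congr 3
  push_cast
  ring

lemma integrableOn_rpow_mul_rpow (ha : -1 < a) (hb : -1 < b) (ht : 0 < t) :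
    IntegrableOn (fun s => (t - s) ^ a * s ^ b) (Set.Ioo 0 t) := by
  refine Integrable.of_integral_ne_zero ?_
  rw [setIntegral_rpow_mul_rpow_eq_beta ha hb ht]
  have := ProbabilityTheory.beta_pos (neg_lt_iff_pos_add.1 hb) (neg_lt_iff_pos_add.1 ha)
  positivity

variable {F : ℝ → ℝ} {c : ℝ}

lemma integrableOn_of_abs_le_rpow_mul_rpow (ha : -1 < a) (hb : -1 < b) (ht : 0 < t)
    (hF : AEStronglyMeasurable F (volume.restrict (Set.Ioo 0 t)))
    (hFc : ∀ s ∈ Set.Ioo 0 t, |F s| ≤ c * ((t - s) ^ a * s ^ b)) :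
    IntegrableOn F (Set.Ioo 0 t) :=
  ((integrableOn_rpow_mul_rpow ha hb ht).const_mul c).mono' hF
    (ae_restrict_of_forall_mem measurableSet_Ioo hFc)

lemma abs_setIntegral_le_of_abs_le_rpow_mul_rpow (ha : -1 < a) (hb : -1 < b) (ht : 0 < t)
    (hFc : ∀ s ∈ Set.Ioo 0 t, |F s| ≤ c * ((t - s) ^ a * s ^ b)) :
    |∫ s in Set.Ioo 0 t, F s| ≤
      c * (t ^ (a + b + 1) * ProbabilityTheory.beta (b + 1) (a + 1)) := by
  rw [← setIntegral_rpow_mul_rpow_eq_beta ha hb ht, ← integral_const_mul, ← Real.norm_eq_abs]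
  refine norm_integral_le_of_norm_le ((integrableOn_rpow_mul_rpow ha hb ht).const_mul c) ?_
  exact ae_restrict_of_forall_mem measurableSet_Ioo hFc

end TimeIntegral

section Duhamel

/-- The Duhamel-type operator `w(t,x) = ∫_0^t (P_{t-s} ∗ (v(s,·)·g))(x) ds`. -/
noncomputable def duhamel (v : ℝ → ℝ → ℝ) (g : ℝ → ℝ) (t x : ℝ) : ℝ :=
  ∫ s in Set.Ioo 0 t, cauchyConv (t - s) (fun y => v s y * g y) x

variable {α β γ t m V : ℝ} {g : ℝ → ℝ} {v : ℝ → ℝ → ℝ}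

lemma integrable_cauchyKer_mul_of_continuousOn (hg : Continuous g) (hN : BddAbove (distSet α g))
    (hv : ContinuousOn (fun p : ℝ × ℝ => v p.1 p.2) (Set.Ioo 0 t ×ˢ Set.univ))
    (hV : ∀ s ∈ Set.Ioo 0 t, ∀ y, |v s y| ≤ V * s ^ (-β)) {s : ℝ} (hs : s ∈ Set.Ioo 0 t)
    (x : ℝ) : Integrable fun y => cauchyKer (t - s) (x - y) * (v s y * g y) := by
  have hvs : Continuous (v s) :=
    hv.comp_continuous (f := fun y => (s, y)) (by fun_prop) fun y => ⟨hs, Set.mem_univ y⟩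
  exact integrable_cauchyKer_mul_mul hvs.aestronglyMeasurable (hV s hs)
    (integrable_cauchyKer_mul_of_bddAbove_distSet hg hN (sub_pos.2 hs.2) x)

lemma aestronglyMeasurable_cauchyConv_mul (hg : Continuous g)
    (hv : ContinuousOn (fun p : ℝ × ℝ => v p.1 p.2) (Set.Ioo 0 t ×ˢ Set.univ)) (x : ℝ) :
    AEStronglyMeasurable (fun s => cauchyConv (t - s) (fun y => v s y * g y) x)
      (volume.restrict (Set.Ioo 0 t)) := by
  refine aestronglyMeasurable_cauchyConv ?_ (measurable_const.sub measurable_id) x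
  have hvg : ContinuousOn (fun p : ℝ × ℝ => v p.1 p.2 * g p.2) (Set.Ioo 0 t ×ˢ Set.univ) :=
    hv.mul (by fun_prop)
  have hmeas := hvg.aestronglyMeasurable (μ := volume) (measurableSet_Ioo.prod .univ)
  rwa [Measure.volume_eq_prod, ← Measure.prod_restrict, Measure.restrict_univ] at hmeas

lemma cauchyConv_abs_mul_le_rpow_mul_rpow (hg : Continuous g) (hN : BddAbove (distSet α g))
    (hm : 1 ≤ m) (htm : t ≤ m) (hV : ∀ s ∈ Set.Ioo 0 t, ∀ y, |v s y| ≤ V * s ^ (-β)) {s : ℝ}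
    (hs : s ∈ Set.Ioo 0 t) (x : ℝ) :
    cauchyConv (t - s) (fun y => |v s y * g y|) x ≤
      3 * distNorm α g * m ^ (-α) * V * ((t - s) ^ α * s ^ (-β)) :=
  (cauchyConv_abs_mul_le_rpow hg hN hm (sub_pos.2 hs.2) (by linarith [hs.1]) (hV s hs) x).trans_eq
    (by ring)

lemma abs_cauchyConv_mul_le_rpow_mul_rpow (hg : Continuous g) (hN : BddAbove (distSet α g))
    (hm : 1 ≤ m) (htm : t ≤ m) (hV : ∀ s ∈ Set.Ioo 0 t, ∀ y, |v s y| ≤ V * s ^ (-β)) {s : ℝ}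
    (hs : s ∈ Set.Ioo 0 t) (x : ℝ) :
    |cauchyConv (t - s) (fun y => v s y * g y) x| ≤
      3 * distNorm α g * m ^ (-α) * V * ((t - s) ^ α * s ^ (-β)) :=
  (abs_cauchyConv_le (sub_pos.2 hs.2).le _ x).trans
    (cauchyConv_abs_mul_le_rpow_mul_rpow hg hN hm htm hV hs x)

lemma integrableOn_cauchyConv_mul (hg : Continuous g) (hN : BddAbove (distSet α g))
    (hv : ContinuousOn (fun p : ℝ × ℝ => v p.1 p.2) (Set.Ioo 0 t ×ˢ Set.univ))
    (hV : ∀ s ∈ Set.Ioo 0 t, ∀ y, |v s y| ≤ V * s ^ (-β)) (hα : -1 < α) (hβ : β < 1)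
    (ht : 0 < t) (x : ℝ) :
    IntegrableOn (fun s => cauchyConv (t - s) (fun y => v s y * g y) x) (Set.Ioo 0 t) :=
  integrableOn_of_abs_le_rpow_mul_rpow hα (neg_lt_neg hβ) ht
    (aestronglyMeasurable_cauchyConv_mul hg hv x) fun _ hs =>
    abs_cauchyConv_mul_le_rpow_mul_rpow hg hN (le_max_left 1 t) (le_max_right 1 t) hV hs x

lemma abs_duhamel_le (hg : Continuous g) (hN : BddAbove (distSet α g)) (hm : 1 ≤ m) (htm : t ≤ m)
    (hV : ∀ s ∈ Set.Ioo 0 t, ∀ y, |v s y| ≤ V * s ^ (-β)) (hα : -1 < α) (hβ : β < 1)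
    (ht : 0 < t) (x : ℝ) :
    |duhamel v g t x| ≤ 3 * distNorm α g * m ^ (-α) * V *
      (t ^ (α + -β + 1) * ProbabilityTheory.beta (-β + 1) (α + 1)) :=
  abs_setIntegral_le_of_abs_le_rpow_mul_rpow hα (neg_lt_neg hβ) ht fun _ hs =>
    abs_cauchyConv_mul_le_rpow_mul_rpow hg hN hm htm hV hs x

lemma abs_cauchyConv_mul_sub_le_rpow_mul_rpow (hg : Continuous g) (hN : BddAbove (distSet α g))
    (hv : ContinuousOn (fun p : ℝ × ℝ => v p.1 p.2) (Set.Ioo 0 t ×ˢ Set.univ))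
    (hm : 1 ≤ m) (htm : t ≤ m) (hV : ∀ s ∈ Set.Ioo 0 t, ∀ y, |v s y| ≤ V * s ^ (-β))
    (hγ0 : 0 ≤ γ) (hγ1 : γ ≤ 1) {s : ℝ} (hs : s ∈ Set.Ioo 0 t) (x z : ℝ) :
    |cauchyConv (t - s) (fun y => v s y * g y) x - cauchyConv (t - s) (fun y => v s y * g y) z| ≤
      6 * distNorm α g * m ^ (-α) * V * |x - z| ^ γ * ((t - s) ^ (α - γ) * s ^ (-β)) := by
  have hr : 0 < t - s := sub_pos.2 hs.2
  have hint := integrable_cauchyKer_mul_of_continuousOn hg hN hv hV hs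
  have hbound := cauchyConv_abs_mul_le_rpow_mul_rpow hg hN hm htm hV hs
  set B := 3 * distNorm α g * m ^ (-α) * V * ((t - s) ^ α * s ^ (-β)) with hB
  calc _ ≤ (|x - z| / (t - s)) ^ γ * (cauchyConv (t - s) (fun y => |v s y * g y|) x +
        cauchyConv (t - s) (fun y => |v s y * g y|) z) :=
        abs_cauchyConv_sub_le hr hγ0 hγ1 (hint x) (hint z)
    _ ≤ (|x - z| / (t - s)) ^ γ * (B + B) := by
        gcongr
        exacts [hbound x, hbound z]
    _ = _ := by
        rw [hB, Real.div_rpow (abs_nonneg _) hr.le, Real.rpow_sub hr]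
        ring

lemma abs_duhamel_sub_le (hg : Continuous g) (hN : BddAbove (distSet α g))
    (hv : ContinuousOn (fun p : ℝ × ℝ => v p.1 p.2) (Set.Ioo 0 t ×ˢ Set.univ))
    (hm : 1 ≤ m) (htm : t ≤ m) (hV : ∀ s ∈ Set.Ioo 0 t, ∀ y, |v s y| ≤ V * s ^ (-β))
    (hγ0 : 0 ≤ γ) (hγ1 : γ ≤ 1) (hγα : γ < 1 + α) (hβ : β < 1) (ht : 0 < t) (x z : ℝ) :
    |duhamel v g t x - duhamel v g t z| ≤ 6 * distNorm α g * m ^ (-α) * V * |x - z| ^ γ *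
      (t ^ (α - γ + -β + 1) * ProbabilityTheory.beta (-β + 1) (α - γ + 1)) := by
  have hint := integrableOn_cauchyConv_mul hg hN hv hV (by linarith) hβ ht
  unfold duhamel
  rw [← integral_sub (hint x) (hint z)]
  exact abs_setIntegral_le_of_abs_le_rpow_mul_rpow (by linarith) (neg_lt_neg hβ) ht fun s hs =>
    abs_cauchyConv_mul_sub_le_rpow_mul_rpow hg hN hv hm htm hV hγ0 hγ1 hs x z

lemma rpow_mul_abs_duhamel_add_div_le (hg : Continuous g) (hN : BddAbove (distSet α g))
    (hv : ContinuousOn (fun p : ℝ × ℝ => v p.1 p.2) (Set.Ioo 0 t ×ˢ Set.univ))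
    (hm : 1 ≤ m) (htm : t ≤ m) (hV : ∀ s ∈ Set.Ioo 0 t, ∀ y, |v s y| ≤ V * s ^ (-β))
    (hγ0 : 0 ≤ γ) (hγ1 : γ ≤ 1) (hγα : γ < 1 + α) (hβ : β < 1) (ht : 0 < t) (x : ℝ) {x' y' : ℝ}
    (hne : x' ≠ y') :
    t ^ β * (|duhamel v g t x| + |duhamel v g t x' - duhamel v g t y'| / |x' - y'| ^ γ) ≤
      3 * distNorm α g * m ^ (-α) * V * ((t ^ γ * ProbabilityTheory.beta (-β + 1) (α + 1) +
        2 * ProbabilityTheory.beta (-β + 1) (α - γ + 1)) * t ^ (1 + α - γ)) := by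
  set A := 3 * distNorm α g * m ^ (-α) * V
  set b₀ := ProbabilityTheory.beta (-β + 1) (α + 1)
  set b₁ := ProbabilityTheory.beta (-β + 1) (α - γ + 1)
  have hsup : |duhamel v g t x| ≤ A * (t ^ (α + -β + 1) * b₀) :=
    abs_duhamel_le hg hN hm htm hV (by linarith) hβ ht x
  have hquot : |duhamel v g t x' - duhamel v g t y'| / |x' - y'| ^ γ ≤
      2 * (A * (t ^ (α - γ + -β + 1) * b₁)) := by
    rw [div_le_iff₀ (Real.rpow_pos_of_pos (abs_pos.2 (sub_ne_zero.2 hne)) γ)]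
    refine (abs_duhamel_sub_le hg hN hv hm htm hV hγ0 hγ1 hγα hβ ht x' y').trans_eq ?_
    ring
  have hsup_pow : t ^ β * t ^ (α + -β + 1) = t ^ γ * t ^ (1 + α - γ) := by
    rw [← Real.rpow_add ht, ← Real.rpow_add ht]
    ring_nf
  have hquot_pow : t ^ β * t ^ (α - γ + -β + 1) = t ^ (1 + α - γ) := by
    rw [← Real.rpow_add ht]
    ring_nf
  calc t ^ β * (|duhamel v g t x| + |duhamel v g t x' - duhamel v g t y'| / |x' - y'| ^ γ)
      ≤ t ^ β * (A * (t ^ (α + -β + 1) * b₀) + 2 * (A * (t ^ (α - γ + -β + 1) * b₁))) := by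
        gcongr
    _ = A * ((t ^ β * t ^ (α + -β + 1)) * b₀ + 2 * (t ^ β * t ^ (α - γ + -β + 1)) * b₁) := by
        ring
    _ = A * ((t ^ γ * b₀ + 2 * b₁) * t ^ (1 + α - γ)) := by
        rw [hsup_pow, hquot_pow]
        ring

end Duhamel

lemma abs_le_holderNorm {γ : ℝ} {h : ℝ → ℝ} (hh : BddAbove (Set.range fun x => |h x|)) (x : ℝ) :
    |h x| ≤ holderNorm γ h := by
  refine (le_csSup hh (Set.mem_range_self x)).trans (le_add_of_nonneg_right (Real.sSup_nonneg ?_))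
  rintro _ ⟨x, y, -, -, rfl⟩
  positivity

lemma rpow_mul_abs_le_sSup_rpow_mul_holderNorm {β γ T : ℝ} {v : ℝ → ℝ → ℝ}
    (hv : ∀ s ∈ Set.Ioc 0 T, BddAbove (Set.range fun y => |v s y|))
    (hV : BddAbove {r | ∃ s ∈ Set.Ioc 0 T, r = s ^ β * holderNorm γ (v s)}) {s : ℝ}
    (hs : s ∈ Set.Ioc 0 T) (y : ℝ) :
    s ^ β * |v s y| ≤ sSup {r | ∃ s ∈ Set.Ioc 0 T, r = s ^ β * holderNorm γ (v s)} :=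
  (mul_le_mul_of_nonneg_left (abs_le_holderNorm (hv s hs) y) (Real.rpow_nonneg hs.1.le β)).trans
    (le_csSup hV ⟨s, hs, rfl⟩)

theorem duhamel_operator_bound_general (α β γ T : ℝ) (hγ0 : 0 ≤ γ) (hγ1 : γ ≤ 1)
    (hγα : γ < 1 + α) (hβ : β < 1) :
    ∃ C : ℝ, ∀ g : ℝ → ℝ, Continuous g → BddAbove (distSet α g) →
      ∀ v : ℝ → ℝ → ℝ,
        ContinuousOn (fun p : ℝ × ℝ => v p.1 p.2) (Set.Ioc 0 T ×ˢ Set.univ) →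
        ∀ V : ℝ, (∀ s ∈ Set.Ioc 0 T, ∀ y, s ^ β * |v s y| ≤ V) →
        ∀ t ∈ Set.Ioc 0 T,
          (∀ x,
            (∀ s ∈ Set.Ioo 0 t,
              Integrable fun y => cauchyKer (t - s) (x - y) * (v s y * g y)) ∧
            IntegrableOn (fun s => cauchyConv (t - s) (fun y => v s y * g y) x) (Set.Ioo 0 t)) ∧
          ∀ x x' y', x' ≠ y' →
            t ^ β * (|duhamel v g t x| +
              |duhamel v g t x' - duhamel v g t y'| / |x' - y'| ^ γ) ≤
                C * distNorm α g * T ^ (1 + α - γ) * V := by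
  let m := max 1 T
  let b₀ := ProbabilityTheory.beta (-β + 1) (α + 1)
  let b₁ := ProbabilityTheory.beta (-β + 1) (α - γ + 1)
  have hb₀ : 0 < b₀ := ProbabilityTheory.beta_pos (by linarith) (by linarith)
  have hb₁ : 0 < b₁ := ProbabilityTheory.beta_pos (by linarith) (by linarith)
  refine ⟨3 * m ^ (-α) * (T ^ γ * b₀ + 2 * b₁), fun g hg hN v hv V hV t ⟨ht, htT⟩ => ?_⟩
  have hsub : Set.Ioo 0 t ⊆ Set.Ioc 0 T := fun s hs => ⟨hs.1, hs.2.le.trans htT⟩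
  have hv' := hv.mono (Set.prod_mono_left hsub)
  have hV' : ∀ s ∈ Set.Ioo 0 t, ∀ y, |v s y| ≤ V * s ^ (-β) := fun s hs y => by
    rw [Real.rpow_neg hs.1.le, le_mul_inv_iff₀' (Real.rpow_pos_of_pos hs.1 β)]
    exact hV s (hsub hs) y
  refine ⟨fun x => ⟨fun s hs => integrable_cauchyKer_mul_of_continuousOn hg hN hv' hV' hs x,
    integrableOn_cauchyConv_mul hg hN hv' hV' (by linarith) hβ ht x⟩, fun x x' y' hne => ?_⟩
  have hN0 : 0 ≤ distNorm α g := distNorm_nonneg α g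
  have hV0 : 0 ≤ V :=
    (mul_nonneg (Real.rpow_nonneg ht.le β) (abs_nonneg _)).trans (hV t ⟨ht, htT⟩ 0)
  calc t ^ β * (|duhamel v g t x| + |duhamel v g t x' - duhamel v g t y'| / |x' - y'| ^ γ)
      ≤ 3 * distNorm α g * m ^ (-α) * V * ((t ^ γ * b₀ + 2 * b₁) * t ^ (1 + α - γ)) :=
        rpow_mul_abs_duhamel_add_div_le hg hN hv' (le_max_left 1 T)
          (htT.trans (le_max_right 1 T)) hV' hγ0 hγ1 hγα hβ ht x hne
    _ ≤ 3 * distNorm α g * m ^ (-α) * V * ((T ^ γ * b₀ + 2 * b₁) * T ^ (1 + α - γ)) := by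
        have hT : 0 < T := ht.trans_le htT
        have : 0 ≤ 1 + α - γ := by linarith
        gcongr
    _ = 3 * m ^ (-α) * (T ^ γ * b₀ + 2 * b₁) * distNorm α g * T ^ (1 + α - γ) * V := by
        ring

/-- Boundedness of the Duhamel-type operator `v ↦ ∫_0^t P_{t-s} ∗ (v(s,·)·g) ds` in
the weighted space `X_T^κ(C^(1/2+κ))`: for `κ ∈ (0,1/4)` and `T > 0` there is
`C < ∞` such that for `g` bounded continuous with `N_{-κ}(g) < ∞` and `v` jointly
continuous on `(0,T] × ℝ` with `sup_{s ∈ (0,T]} s^(1-κ) ‖v(s,·)‖_{C^(1/2+κ)} < ∞`,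
the function `w(t,x) = ∫_0^t (P_{t-s} ∗ (v(s,·)·g))(x) ds` is well-defined and
`sup_{t∈(0,T]} t^(1-κ) ‖w(t,·)‖_{C^(1/2+κ)}
  ≤ C N_{-κ}(g) T^(1/2-2κ) sup_{s∈(0,T]} s^(1-κ) ‖v(s,·)‖_{C^(1/2+κ)}`
(the `C^(1/2+κ)` norm of `w(t,·)` being expressed pointwise). -/
theorem duhamel_operator_bound (κ T : ℝ) (hκ : κ ∈ Set.Ioo (0 : ℝ) (1 / 4))
    (hT : 0 < T) :
    ∃ C : ℝ, ∀ g : ℝ → ℝ, Continuous g → (∃ M, ∀ x, |g x| ≤ M) →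
      BddAbove (distSet (-κ) g) →
      ∀ v : ℝ → ℝ → ℝ,
        ContinuousOn (fun p : ℝ × ℝ => v p.1 p.2) (Set.Ioc 0 T ×ˢ Set.univ) →
        (∀ s : ℝ, s ∈ Set.Ioc (0 : ℝ) T →
          Continuous (v s) ∧ HolderFinite (1 / 2 + κ) (v s)) →
        BddAbove {r : ℝ | ∃ s ∈ Set.Ioc (0 : ℝ) T,
          r = s ^ (1 - κ) * holderNorm (1 / 2 + κ) (v s)} →
        ∀ t : ℝ, t ∈ Set.Ioc (0 : ℝ) T →
          (∀ x : ℝ,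
            (∀ s ∈ Set.Ioo (0 : ℝ) t,
              Integrable (fun y => cauchyKer (t - s) (x - y) * (v s y * g y))) ∧
            IntegrableOn
              (fun s => ∫ y : ℝ, cauchyKer (t - s) (x - y) * (v s y * g y))
              (Set.Ioo 0 t)) ∧
          ∀ x x' y' : ℝ, x' ≠ y' → |x' - y'| ≤ 1 →
            t ^ (1 - κ) *
                (|∫ s in Set.Ioo (0 : ℝ) t,
                    ∫ y : ℝ, cauchyKer (t - s) (x - y) * (v s y * g y)| +
                  |(∫ s in Set.Ioo (0 : ℝ) t,
                      ∫ y : ℝ, cauchyKer (t - s) (x' - y) * (v s y * g y)) -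
                    ∫ s in Set.Ioo (0 : ℝ) t,
                      ∫ y : ℝ, cauchyKer (t - s) (y' - y) * (v s y * g y)| /
                    |x' - y'| ^ (1 / 2 + κ))
              ≤ C * distNorm (-κ) g * T ^ (1 / 2 - 2 * κ) *
                  sSup {r : ℝ | ∃ s ∈ Set.Ioc (0 : ℝ) T,
                    r = s ^ (1 - κ) * holderNorm (1 / 2 + κ) (v s)} := by
  obtain ⟨C, hC⟩ := duhamel_operator_bound_general (-κ) (1 - κ) (1 / 2 + κ) T
    (by linarith [hκ.1]) (by linarith [hκ.2]) (by linarith [hκ.2]) (by linarith [hκ.1])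
  rw [show 1 + -κ - (1 / 2 + κ) = 1 / 2 - 2 * κ by ring] at hC
  refine ⟨C, fun g hg _ hN v hv hvs hV t ht => ?_⟩
  obtain ⟨hint, hbound⟩ := hC g hg hN v hv _
    (fun _ => rpow_mul_abs_le_sSup_rpow_mul_holderNorm (fun s hs => (hvs s hs).2.1) hV) t ht
  exact ⟨hint, fun x x' y' hne _ => hbound x x' y' hne⟩
end
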